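/- Sign of the defocusing combination: let 0 < c < 8/225, g(u) := (Real.log (Real.log (10 + u²)))^c, f(u) := u⁵·g(u), F(u) := ∫₀ᵘ f(v) dv. Then 4·F(u) − u·f(u) ≤ 0 for every u ∈ ℝ. -/

import Mathlib

open MeasureTheory Set

noncomputable section

abbrev Space : Type := EuclideanSpace ℝ (Fin 3)

/-- The loglog weight `g(u) = (log log (10 + u²))^c`. -/
def g (c u : ℝ) : ℝ := Real.log (Real.log (10 + u ^ 2)) ^ c

/-- The nonlinearity `f(u) = u⁵ g(u)`. -/
def f (c u : ℝ) : ℝ := u ^ 5 * g c u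

/-- The potential `F(u) = ∫₀ᵘ f(v) dv`. -/
def Fpot (c u : ℝ) : ℝ := ∫ v in (0:ℝ)..u, f c v

/-- First time derivative `∂ₜ u`. -/
def dt1 (u : ℝ → Space → ℝ) (t : ℝ) (x : Space) : ℝ := deriv (fun s => u s x) t

/-- Second time derivative `∂ₜₜ u`. -/
def dt2 (u : ℝ → Space → ℝ) (t : ℝ) (x : Space) : ℝ := deriv (fun s => dt1 u s x) t

/-- The spatial Laplacian. -/
def lap (h : Space → ℝ) (x : Space) : ℝ :=
  ∑ i : Fin 3, fderiv ℝ (fun y => fderiv ℝ h y (EuclideanSpace.single i 1)) x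
    (EuclideanSpace.single i 1)

/-- A classical solution of `∂ₜₜ u - Δ u = -f(u)` on the time interval `J`:
infinitely differentiable, compactly supported in space for each fixed time,
and satisfying the equation. -/
structure IsClassicalSol (c : ℝ) (J : Set ℝ) (u : ℝ → Space → ℝ) : Prop where
  smooth : ContDiffOn ℝ (⊤ : ℕ∞) (fun p : ℝ × Space => u p.1 p.2) (J ×ˢ (Set.univ : Set Space))
  compactSpt : ∀ t ∈ J, HasCompactSupport (u t)
  eqn : ∀ t ∈ J, ∀ x : Space, dt2 u t x - lap (u t) x = - f c (u t x)

/-- The conserved energy. -/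
def energy (c : ℝ) (u : ℝ → Space → ℝ) (t : ℝ) : ℝ :=
  (1/2) * (∫ x : Space, (dt1 u t x) ^ 2)
    + (1/2) * (∫ x : Space, ‖gradient (u t) x‖ ^ 2)
    + ∫ x : Space, Fpot c (u t x)

/-- Spatial `L^r` norm. -/
def LxNorm (r : ℝ) (h : Space → ℝ) : ℝ := (∫ x : Space, |h x| ^ r) ^ (1 / r)

/-- Mixed norm `L^q_t L^r_x (J × ℝ³)`. -/
def LtLxNorm (q r : ℝ) (J : Set ℝ) (u : ℝ → Space → ℝ) : ℝ :=
  (∫ t in J, (LxNorm r (u t)) ^ q) ^ (1 / q)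

/-- The homogeneous `H̃² = Ḣ² ∩ Ḣ¹` norm. -/
def H2tildeNorm (h : Space → ℝ) : ℝ :=
  (∫ x : Space, ‖iteratedFDeriv ℝ 2 h x‖ ^ 2) ^ ((1:ℝ)/2)
    + (∫ x : Space, ‖gradient h x‖ ^ 2) ^ ((1:ℝ)/2)

/-- The inhomogeneous `H¹` norm. -/
def H1Norm (h : Space → ℝ) : ℝ :=
  (∫ x : Space, (h x) ^ 2) ^ ((1:ℝ)/2)
    + (∫ x : Space, ‖gradient h x‖ ^ 2) ^ ((1:ℝ)/2)

/-- Spatial `L^r` norm restricted to the interior of the light cone at time `t`,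
i.e. the norm of `h · 1_{|x| < t}`. -/
def LxConeNorm (r t : ℝ) (h : Space → ℝ) : ℝ :=
  (∫ x in Metric.ball (0:Space) t, |h x| ^ r) ^ (1 / r)

/-- Mixed norm `L^q_t L^r_x (Γ₊(J))` on the truncated forward light cone. -/
def LtLxConeNorm (q r : ℝ) (J : Set ℝ) (u : ℝ → Space → ℝ) : ℝ :=
  (∫ t in J, (LxConeNorm r t (u t)) ^ q) ^ (1 / q)

/-- The local energy `e(t)` (integral over the ball `|x| ≤ t`). -/
def locEnergy (c : ℝ) (u : ℝ → Space → ℝ) (t : ℝ) : ℝ :=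
  (1/2) * (∫ x in Metric.closedBall (0:Space) t, (dt1 u t x) ^ 2)
    + (1/2) * (∫ x in Metric.closedBall (0:Space) t, ‖gradient (u t) x‖ ^ 2)
    + ∫ x in Metric.closedBall (0:Space) t, Fpot c (u t x)

theorem aux_one_lt (u : ℝ) : 1 < Real.log (10 + u ^ 2) := by
  rw [Real.lt_log_iff_exp_lt (by positivity)]
  nlinarith [Real.exp_one_lt_d9, sq_nonneg u]

theorem aux_ll_pos (u : ℝ) : 0 < Real.log (Real.log (10 + u ^ 2)) :=
  Real.log_pos (aux_one_lt u)

theorem aux_g_nonneg (c u : ℝ) : 0 ≤ g c u :=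
  Real.rpow_nonneg (aux_ll_pos u).le c

theorem aux_g_mono (c : ℝ) (hc : 0 < c) (u v : ℝ) (h : v ^ 2 ≤ u ^ 2) : g c v ≤ g c u := by
  unfold g
  apply Real.rpow_le_rpow (aux_ll_pos v).le _ hc.le
  apply Real.log_le_log (by linarith [aux_one_lt v])
  apply Real.log_le_log (by positivity)
  linarith

theorem aux_cont (c : ℝ) : Continuous (f c) := by
  unfold f g
  refine (continuous_id.pow 5).mul ?_
  refine Continuous.rpow_const ?_ (fun x => Or.inl (aux_ll_pos x).ne')
  refine Continuous.log ?_ (fun x => by linarith [aux_one_lt x])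
  refine Continuous.log (by fun_prop) (fun x => by positivity)

theorem aux_nonneg (c : ℝ) (hc : 0 < c) (u : ℝ) (hu : 0 ≤ u) :
    4 * Fpot c u - u * f c u ≤ 0 := by
  have h1 : Fpot c u ≤ ∫ v in (0:ℝ)..u, v ^ 5 * g c u := by
    unfold Fpot
    apply intervalIntegral.integral_mono_on hu
    · exact (aux_cont c).intervalIntegrable _ _
    · exact (Continuous.intervalIntegrable (by fun_prop) _ _)
    · intro x hx
      unfold f
      have := aux_g_mono c hc u x (pow_le_pow_left₀ hx.1 hx.2 2)
      exact mul_le_mul_of_nonneg_left this (pow_nonneg hx.1 5)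
  rw [intervalIntegral.integral_mul_const, integral_pow] at h1
  have h2 : 0 ≤ u ^ 6 * g c u := mul_nonneg (by positivity) (aux_g_nonneg c u)
  have h3 : u * f c u = u ^ 6 * g c u := by unfold f; ring
  norm_num at h1
  rw [h3]
  nlinarith

theorem aux_f_neg (c u : ℝ) : f c (-u) = - f c u := by
  unfold f g
  rw [neg_sq]
  ring

theorem aux_F_neg (c u : ℝ) : Fpot c (-u) = Fpot c u := by
  unfold Fpot
  have h := intervalIntegral.integral_comp_neg (a := 0) (b := u) (f c)
  simp only [aux_f_neg, intervalIntegral.integral_neg, neg_zero] at h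
  rw [intervalIntegral.integral_symm, ← h, neg_neg]

/-- Sign of the defocusing combination. -/
theorem defocusing_sign (c : ℝ) (hc : 0 < c) (hc' : c < 8 / 225) (u : ℝ) :
    4 * Fpot c u - u * f c u ≤ 0 := by
  rcases le_total 0 u with h | h
  · exact aux_nonneg c hc u h
  · have := aux_nonneg c hc (-u) (by linarith)
    rw [aux_F_neg, aux_f_neg] at this
    linarith
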